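/- Let k > d ≥ 0 be integers and let G be a k-degenerate finite simple graph on n vertices whose independence number equals n/(k+1) (the minimum possible for maximally k-degenerate graphs). Then α_d(G) ≥ (d−1)·n/(k+1). -/

import Mathlib

/-- The subgraph of `G` induced on `A` is `d`-degenerate: every nonempty (finite)
subset of `A` contains a vertex with at most `d` neighbours inside that subset. -/
def DegenOn {V : Type*} (G : SimpleGraph V) (d : ℕ) (A : Set V) : Prop :=
  ∀ S : Set V, S ⊆ A → S.Finite → S.Nonempty → ∃ v ∈ S, (S ∩ G.neighborSet v).ncard ≤ d

/-- `G` is `d`-degenerate. -/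
def Degen {V : Type*} (G : SimpleGraph V) (d : ℕ) : Prop :=
  DegenOn G d Set.univ

/-- `α_d(G)`: the maximum number of vertices of an induced `d`-degenerate subgraph of `G`. -/
noncomputable def alphaDeg {V : Type*} [Fintype V] (G : SimpleGraph V) (d : ℕ) : ℕ :=
  sSup {m : ℕ | ∃ A : Set V, DegenOn G d A ∧ A.ncard = m}

theorem degenOn_insert {V : Type*} [Finite V] (G : SimpleGraph V) (d : ℕ) (B : Set V) (v : V)
    (hB : DegenOn G d B) (hv : (B ∩ G.neighborSet v).ncard ≤ d) : DegenOn G d (insert v B) := by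
  intro S hS hf hne
  by_cases h : v ∈ S
  · refine ⟨v, h, le_trans (Set.ncard_le_ncard ?_ (Set.toFinite _)) hv⟩
    rintro x ⟨hx, hxv⟩
    refine ⟨?_, hxv⟩
    rcases hS hx with rfl | hx'
    · exact absurd hxv (by simp)
    · exact hx'
  · refine hB S ?_ hf hne
    intro x hx
    rcases hS hx with rfl | hx'
    · exact absurd hx h
    · exact hx'

theorem degenOn_mono {V : Type*} (G : SimpleGraph V) (d : ℕ) {A B : Set V} (h : B ⊆ A)
    (hA : DegenOn G d A) : DegenOn G d B := fun S hS => hA S (hS.trans h)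

theorem degenOn_split {V : Type*} [Finite V] (G : SimpleGraph V) (a : ℕ) (n : ℕ) :
    ∀ A : Set V, A.ncard = n → DegenOn G (a + 1) A →
      ∃ B ⊆ A, DegenOn G a B ∧ DegenOn G 0 (A \ B) := by
  induction n with
  | zero =>
    intro A hA _
    have hA : A = ∅ := (Set.ncard_eq_zero (Set.toFinite _)).1 hA
    subst hA
    refine ⟨∅, subset_rfl, ?_, ?_⟩ <;> intro S hS _ hne
    · exact absurd (hne.mono hS) (by simp)
    · exact absurd (hne.mono hS) (by simp)
  | succ n ih =>
    intro A hA hd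
    have hne : A.Nonempty := by
      rw [← Set.ncard_pos (Set.toFinite _)]; omega
    obtain ⟨v, hvA, hv⟩ := hd A subset_rfl (Set.toFinite _) hne
    obtain ⟨B, hBA, hB, hC⟩ := ih (A \ {v})
      (by rw [Set.ncard_sdiff_singleton_of_mem hvA]; omega)
      (degenOn_mono G _ Set.diff_subset hd)
    have hvB : v ∉ B := fun h => (hBA h).2 rfl
    by_cases hb : (B ∩ G.neighborSet v).ncard ≤ a
    · refine ⟨insert v B, ?_, degenOn_insert G a B v hB hb, degenOn_mono G 0 ?_ hC⟩
      · exact Set.insert_subset hvA (hBA.trans Set.diff_subset)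
      · rintro x ⟨hx, hx'⟩
        simp only [Set.mem_insert_iff, not_or] at hx'
        exact ⟨⟨hx, hx'.1⟩, hx'.2⟩
    · refine ⟨B, hBA.trans Set.diff_subset, hB, ?_⟩
      have key : (B ∩ G.neighborSet v) ∪ (((A \ {v}) \ B) ∩ G.neighborSet v)
          ⊆ A ∩ G.neighborSet v := by
        rintro x (⟨h1, h2⟩ | ⟨h1, h2⟩)
        · exact ⟨(hBA h1).1, h2⟩
        · exact ⟨h1.1.1, h2⟩
      have h1 := Set.ncard_le_ncard key (Set.toFinite _)
      rw [Set.ncard_union_eq (by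
        rw [Set.disjoint_left]
        rintro x ⟨h1, _⟩ ⟨h2, _⟩
        exact h2.2 h1) (Set.toFinite _) (Set.toFinite _)] at h1
      refine degenOn_mono G 0 ?_ (degenOn_insert G 0 ((A \ {v}) \ B) v hC (by omega))
      rintro x ⟨hx, hx'⟩
      by_cases hxv : x = v
      · exact Or.inl hxv
      · exact Or.inr ⟨⟨hx, hxv⟩, hx'⟩

theorem le_alphaDeg {V : Type*} [Fintype V] (G : SimpleGraph V) (d : ℕ) (A : Set V)
    (h : DegenOn G d A) : A.ncard ≤ alphaDeg G d := by
  refine le_csSup ⟨Nat.card V, ?_⟩ ⟨A, h, rfl⟩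
  rintro m ⟨B, _, rfl⟩
  exact Set.ncard_le_card B

theorem exists_large {V : Type*} [Fintype V] (G : SimpleGraph V) (d j : ℕ) :
    ∀ A : Set V, DegenOn G (d + j) A →
      ∃ B : Set V, DegenOn G d B ∧ A.ncard ≤ B.ncard + j * alphaDeg G 0 := by
  induction j with
  | zero => exact fun A hA => ⟨A, hA, by simp⟩
  | succ j ih =>
    intro A hA
    obtain ⟨B, hBA, hB, hC⟩ := degenOn_split G (d + j) _ A rfl hA
    obtain ⟨D, hD, hle⟩ := ih B hB
    refine ⟨D, hD, ?_⟩
    have h1 := le_alphaDeg G 0 _ hC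
    have h2 := Set.ncard_sdiff_add_ncard_of_subset hBA (Set.toFinite _)
    have h3 : (j + 1) * alphaDeg G 0 = j * alphaDeg G 0 + alphaDeg G 0 := by ring
    omega

theorem stmt_9 {V : Type*} [Fintype V] (G : SimpleGraph V) (k d : ℕ) (hdk : d < k)
    (hG : Degen G k)
    (hind : (alphaDeg G 0 : ℚ) = (Fintype.card V : ℚ) / ((k : ℚ) + 1)) :
    ((d : ℚ) - 1) * (Fintype.card V : ℚ) / ((k : ℚ) + 1) ≤ (alphaDeg G d : ℚ) := by
  obtain ⟨j, rfl⟩ := Nat.exists_eq_add_of_lt hdk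
  obtain ⟨B, hB, hle⟩ := exists_large G d (j + 1) Set.univ hG
  have h1 := le_alphaDeg G d B hB
  rw [Set.ncard_univ, Nat.card_eq_fintype_card] at hle
  have h2 : (Fintype.card V : ℚ) ≤ alphaDeg G d + (j + 1) * alphaDeg G 0 := by
    exact_mod_cast hle.trans (Nat.add_le_add_right h1 _)
  rw [mul_div_assoc, ← hind]
  have hpos : (((d + j + 1 : ℕ) : ℚ) + 1) ≠ 0 := by positivity
  rw [eq_div_iff hpos] at hind
  push_cast at hind
  have h0 : (0 : ℚ) ≤ alphaDeg G 0 := by positivity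
  nlinarith
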